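/- Assume: (i) for every k, q, Q, the maps x ↦ Ψ_k(q, x) and x ↦ P_n(x, Q) are convex with at most linear growth; (ii) each σ_t is L-Lipschitz with values in [0,∞) and semi-convex with the same constant a ≥ 0 (i.e. x ↦ σ_t(x)² + a x² is convex); (iii) h·max(−κ(t_ℓ), 0) < 1/2 for every ℓ. Then for every k ∈ {0,…,n} and every Q, the truncated swing value function ℝ ∋ x ↦ ṽ_k(x, Q) is convex. -/

import Mathlib

open MeasureTheory ProbabilityTheory

/-- Composed truncated Euler transition operators on `ℝ`,
`P̃_{i:j} = P̃_i ∘ ⋯ ∘ P̃_{j−1}` where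
`P̃_ℓ(f)(x) = E f(x + h κ_ℓ (x − ζ) + √h σ_ℓ(x) Z̃^h)` with the truncated noise
`Z̃^h = Z 1_{|Z| ≤ s}`; `P̃_{ℓ:ℓ}(f) = f`. -/
noncomputable def truncEulerComp {Ω : Type*} [MeasurableSpace Ω] (P : Measure Ω)
    (Z : Ω → ℝ) (s h : ℝ) (κ : ℕ → ℝ) (ζ : ℝ) (σ : ℕ → ℝ → ℝ)
    (i j : ℕ) (f : ℝ → ℝ) : ℝ → ℝ :=
  (List.range' i (j - i)).foldr
    (fun ℓ g x =>
      ∫ ω, g (x + h * κ ℓ * (x - ζ) +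
        Real.sqrt h * σ ℓ x * (if |Z ω| ≤ s then Z ω else 0)) ∂P)
    f

/-!
Everything reduces to one Euler step: with `Y = βx + c + τ(x) Z̃`, the function `F(x) = E f(Y)` must
be convex whenever `f` is. The truncated noise has an atom at `0`, which contributes `f` composed
with an affine map, and the Gaussian density `φ` on `[-s, s]`; by mollification `f` may be taken
`C²`.

The volatility `τ` is only semi-convex, but at each `x₀` with `τ(x₀) > 0` it is touched from below
by `ρ = √Q`, where `Q` is a quadratic with `Q'' = -2A` coming from the support line of `τ² + A x²`;
hence `ρρ'' + ρ'² = -A` at `x₀`, and `|ρ'(x₀)| ≤ M` for the Lipschitz constant `M` of `τ`. If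
`τ(x₀) = 0`, take `ρ = 0`. For convex `f` and symmetric noise the expectation increases with the
volatility, so replacing `τ` by `ρ` touches `F` from below, and a continuous function touched from
below at every point by one with nonnegative second derivative there is convex. With
`Λ = M² + A`, Gaussian integration by parts turns that second derivative into
`∫ f''(Y) ((β + ρ'z)² φ(z) + ρρ'' (φ(z) - φ(s))) dz`, where `ρρ'' ≥ -Λ` and
`φ(z) - φ(s) ≤ (s²/2) φ(z)`. The truncation `s = λ/√Λ` with `λ < 1/(2 + √2)` and the drift bound
`β > 1/2` give `β + ρ'z ≥ s√Λ/√2`, so the bracket is nonnegative.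
-/

open Set Filter Topology

theorem convexOn_le_of_even {g : ℝ → ℝ} (hg : ConvexOn ℝ univ g) (heven : Function.Even g)
    {r R : ℝ} (h : |r| ≤ R) : g r ≤ g R := by
  simpa [heven R] using hg.le_max_of_mem_Icc (mem_univ (-R)) (mem_univ R) (abs_le.1 h)

theorem exists_affine_le_of_convexOn {w : ℝ → ℝ} (hw : ConvexOn ℝ univ w) (x₀ : ℝ) :
    ∃ p, ∀ x, w x₀ + p * (x - x₀) ≤ w x := by
  have hx₀ : x₀ ∈ interior (univ : Set ℝ) := by simp
  refine ⟨derivWithin w (Ioi x₀) x₀, fun x => ?_⟩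
  rcases lt_trichotomy x x₀ with h | rfl | h
  · have hslope := (hw.slope_le_leftDeriv_of_mem_interior (mem_univ x) hx₀ h).trans
      (hw.leftDeriv_le_rightDeriv_of_mem_interior hx₀)
    rw [slope_def_field, div_le_iff₀ (sub_pos.2 h)] at hslope
    linarith
  · simp
  · have hslope := hw.rightDeriv_le_slope_of_mem_interior hx₀ (mem_univ x) h
    rw [slope_def_field, le_div_iff₀ (sub_pos.2 h)] at hslope
    linarith

theorem convexOn_intervalIntegral {E : Type*} [AddCommMonoid E] [Module ℝ E] {K : E → ℝ → ℝ}
    {a b : ℝ} (hab : a ≤ b) (hconv : ∀ z, ConvexOn ℝ univ fun x => K x z)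
    (hint : ∀ x, IntervalIntegrable (K x) volume a b) :
    ConvexOn ℝ univ fun x => ∫ z in a..b, K x z := by
  simp only [intervalIntegral.integral_of_le hab]
  exact integral_convexOn_of_integrand_ae convex_univ (ae_of_all _ hconv) fun x _ => (hint x).1

section Mollify

variable {E : Type*} [NormedAddCommGroup E] [NormedSpace ℝ E]

theorem convexOn_convolution [MeasurableSpace E] [BorelSpace E] {μ : Measure E}
    [IsFiniteMeasureOnCompacts μ] {φ f : E → ℝ} (hφ : Continuous φ) (hφc : HasCompactSupport φ)
    (hφ0 : 0 ≤ φ) (hf : ConvexOn ℝ univ f) (hfc : Continuous f) :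
    ConvexOn ℝ univ (convolution φ f (ContinuousLinearMap.lsmul ℝ ℝ) μ) := by
  refine integral_convexOn_of_integrand_ae convex_univ (ae_of_all _ fun t => ?_) fun x _ => ?_
  · simpa [sub_eq_add_neg] using (hf.translate_left (-t)).smul (hφ0 t)
  · have hcont : Continuous fun t => φ t • f (x - t) := by fun_prop
    exact hcont.integrable_of_hasCompactSupport hφc.smul_right

theorem exists_contDiff_convexOn_tendstoLocallyUniformly [FiniteDimensional ℝ E] {f : E → ℝ}
    (hf : ConvexOn ℝ univ f) :
    ∃ g : ℕ → E → ℝ, (∀ n, ContDiff ℝ 2 (g n)) ∧ (∀ n, ConvexOn ℝ univ (g n)) ∧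
      TendstoLocallyUniformly g f atTop := by
  borelize E
  have hfc : Continuous f := continuousOn_univ.1 (hf.continuousOn isOpen_univ)
  let φ (n : ℕ) : ContDiffBump (0 : E) :=
    ⟨1 / ((n : ℝ) + 1) / 2, 1 / ((n : ℝ) + 1), by positivity, half_lt_self (by positivity)⟩
  have hφ : Tendsto (fun n => (φ n).rOut) atTop (𝓝 0) := tendsto_one_div_add_atTop_nhds_zero_nat
  refine ⟨fun n => convolution ((φ n).normed Measure.addHaar) f (ContinuousLinearMap.lsmul ℝ ℝ)
    Measure.addHaar, fun n => ?_, fun n => ?_, ?_⟩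
  · exact (φ n).hasCompactSupport_normed.contDiff_convolution_left _ (φ n).contDiff_normed
      hfc.locallyIntegrable
  · exact convexOn_convolution (φ n).continuous_normed (φ n).hasCompactSupport_normed
      (φ n).nonneg_normed hf hfc
  · rw [tendstoLocallyUniformly_iff_forall_tendsto]
    intro x
    have hlim := ContDiffBump.convolution_tendsto_right (μ := Measure.addHaar) (g := fun _ => f)
      (φ := fun p : ℕ × E => φ p.1) (k := Prod.snd) (x₀ := x) (z₀ := f x) (l := atTop ×ˢ 𝓝 x)
      (hφ.comp tendsto_fst) (Eventually.of_forall fun _ => hfc.aestronglyMeasurable)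
      ((hfc.tendsto x).comp tendsto_snd) tendsto_snd
    exact (((hfc.tendsto x).comp tendsto_snd).prodMk_nhds hlim).mono_right
      (nhds_le_uniformity (f x))

end Mollify

theorem exists_isLocalMax_of_not_convexOn {F : ℝ → ℝ} (hF : Continuous F)
    (h : ¬ ConvexOn ℝ univ F) :
    ∃ δ > 0, ∃ b u, IsLocalMax (fun x => F x + b * x + δ * x ^ 2) u := by
  contrapose! h
  refine LinearOrder.convexOn_of_lt convex_univ fun x _ y _ hxy p q hp hq hpq => ?_
  simp only [smul_eq_mul]
  obtain rfl : q = 1 - p := by linarith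
  by_contra! hgap
  set z := p * x + (1 - p) * y with hz
  have hxz : z - x = (1 - p) * (y - x) := by rw [hz]; ring
  have hzy : y - z = p * (y - x) := by rw [hz]; ring
  have hyx : 0 < y - x := sub_pos.2 hxy
  have hxz0 : 0 < z - x := hxz ▸ mul_pos hq hyx
  have hzy0 : 0 < y - z := hzy ▸ mul_pos hp hyx
  -- `H` is `F` minus its chord plus a small parabola, all vanishing at the endpoints.
  set S := (F y - F x) / (y - x) with hS
  set δ := (F z - (p * F x + (1 - p) * F y)) / (2 * ((z - x) * (y - z))) with hδ
  have hδ0 : 0 < δ := div_pos (sub_pos.2 hgap) (by positivity)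
  let H : ℝ → ℝ := fun u => F u - (F x + S * (u - x)) + δ * ((u - x) * (u - y))
  have hHx : H x = 0 := by simp [H]
  have hHy : H y = 0 := by simp only [H, hS]; field_simp; ring
  have hHz : 0 < H z := by
    have hSz : S * (z - x) = (1 - p) * (F y - F x) := by rw [hxz, hS]; field_simp
    have hδz : δ * ((z - x) * (y - z)) = (F z - (p * F x + (1 - p) * F y)) / 2 := by
      rw [hδ]; field_simp
    have : H z = (F z - (p * F x + (1 - p) * F y)) / 2 := by
      simp only [H]; linear_combination -hSz - hδz
    linarith
  have hend : ∀ v ∈ Icc x y \ Ioo x y, H v < H z := by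
    rw [Icc_sdiff_Ioo_same hxy.le]
    rintro v (rfl | rfl) <;> linarith
  have hHc : Continuous H := by fun_prop
  obtain ⟨u, -, hu⟩ := isCompact_Icc.exists_isLocalMax_mem_open Ioo_subset_Icc_self
    hHc.continuousOn ⟨(sub_pos.1 hxz0).le, (sub_pos.1 hzy0).le⟩ hend isOpen_Ioo
  refine h δ hδ0 (-S - δ * (x + y)) u (hu.mono fun v hv => ?_)
  simp only [H] at hv
  linarith

theorem nonpos_of_isLocalMax_of_hasDerivAt {g g' : ℝ → ℝ} {x₀ c : ℝ} (hmax : IsLocalMax g x₀)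
    (hg : ∀ᶠ x in 𝓝 x₀, HasDerivAt g (g' x) x) (hg' : HasDerivAt g' c x₀) : c ≤ 0 := by
  by_contra! hc
  have hderiv : deriv g =ᶠ[𝓝 x₀] g' := hg.mono fun x hx => hx.deriv
  have hdd : deriv (deriv g) x₀ = c := hderiv.deriv_eq.trans hg'.deriv
  have hmin : IsLocalMin g x₀ := isLocalMin_of_deriv_deriv_pos (hdd ▸ hc) hmax.deriv_eq_zero
    hg.self_of_nhds.continuousAt
  have hconst : g =ᶠ[𝓝 x₀] fun _ => g x₀ := by
    filter_upwards [hmax, hmin] with x hle hge using le_antisymm hle hge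
  have : deriv (deriv g) x₀ = 0 := by
    simp [hconst.deriv.deriv_eq]
  exact hc.ne' (hdd.symm.trans this)

theorem convexOn_univ_of_touching_below {F : ℝ → ℝ} (hF : Continuous F)
    (h : ∀ x₀, ∃ (G G' : ℝ → ℝ) (c : ℝ), (∀ x, G x ≤ F x) ∧ G x₀ = F x₀ ∧
      (∀ᶠ x in 𝓝 x₀, HasDerivAt G (G' x) x) ∧ HasDerivAt G' c x₀ ∧ 0 ≤ c) :
    ConvexOn ℝ univ F := by
  by_contra hconv
  obtain ⟨δ, hδ, b, u, hmax⟩ := exists_isLocalMax_of_not_convexOn hF hconv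
  obtain ⟨G, G', c, hle, heq, hG, hG', hc⟩ := h u
  have hmaxG : IsLocalMax (fun x => G x + b * x + δ * x ^ 2) u := hmax.mono fun x hx => by
    linarith [hle x]
  have hderiv : ∀ᶠ x in 𝓝 u,
      HasDerivAt (fun x => G x + b * x + δ * x ^ 2) (G' x + b + δ * (2 * x)) x :=
    hG.mono fun x hx => (hx.add (by simpa using (hasDerivAt_id x).const_mul b)).add
      (by simpa using (hasDerivAt_pow 2 x).const_mul δ)
  have hderiv2 : HasDerivAt (fun x => G' x + b + δ * (2 * x)) (c + δ * 2) u :=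
    (hG'.add_const b).add (by simpa using ((hasDerivAt_id u).const_mul 2).const_mul δ)
  linarith [nonpos_of_isLocalMax_of_hasDerivAt hmaxG hderiv hderiv2]

theorem continuous_of_abs_sub_le_mul {τ : ℝ → ℝ} {M : ℝ}
    (hLip : ∀ x y, |τ x - τ y| ≤ M * |x - y|) : Continuous τ :=
  (LipschitzWith.of_dist_le' hLip).continuous

theorem abs_le_of_hasDerivAt_of_le_add_mul_abs {ρ : ℝ → ℝ} {x₀ t M : ℝ} (hρ : HasDerivAt ρ t x₀)
    (hle : ∀ x, ρ x ≤ ρ x₀ + M * |x - x₀|) : |t| ≤ M := by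
  rw [abs_le']
  constructor
  · refine le_of_tendsto hρ.tendsto_slope_zero_right ?_
    filter_upwards [self_mem_nhdsWithin] with e he
    have := hle (x₀ + e)
    rw [add_sub_cancel_left, abs_of_pos he] at this
    rw [smul_eq_mul, inv_mul_le_iff₀ he]
    linarith
  · refine neg_le.1 (ge_of_tendsto hρ.tendsto_slope_zero_left ?_)
    filter_upwards [self_mem_nhdsWithin] with e he
    have := hle (x₀ + e)
    rw [add_sub_cancel_left, abs_of_neg he] at this
    rw [smul_eq_mul, ← div_eq_inv_mul, le_div_iff_of_neg he]
    linarith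

theorem exists_isOpen_hasDerivAt_deriv_of_contDiffAt {ρ : ℝ → ℝ} {x₀ : ℝ}
    (hρ : ContDiffAt ℝ 2 ρ x₀) :
    ∃ U, IsOpen U ∧ x₀ ∈ U ∧ (∀ x ∈ U, HasDerivAt ρ (deriv ρ x) x) ∧
      (∀ x ∈ U, HasDerivAt (deriv ρ) (deriv (deriv ρ) x) x) ∧
      ContinuousOn (deriv (deriv ρ)) U := by
  obtain ⟨V, hV, hx₀, hρV⟩ := hρ.contDiffOn' (m := 2) le_rfl (by simp)
  rw [insert_eq_of_mem (mem_univ x₀), univ_inter] at hρV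
  have hρV' : ContDiffOn ℝ 1 (deriv ρ) V := hρV.deriv_of_isOpen hV (by norm_num)
  refine ⟨V, hV, hx₀, fun x hx => ?_, fun x hx => ?_, ?_⟩
  · exact ((hρV.differentiableOn (by norm_num)).differentiableAt (hV.mem_nhds hx)).hasDerivAt
  · exact ((hρV'.differentiableOn (by norm_num)).differentiableAt (hV.mem_nhds hx)).hasDerivAt
  · exact hρV'.continuousOn_deriv_of_isOpen hV le_rfl

theorem deriv_deriv_sq_of_contDiffAt {ρ : ℝ → ℝ} {x₀ : ℝ} (hρ : ContDiffAt ℝ 2 ρ x₀) :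
    deriv (deriv fun x => ρ x ^ 2) x₀
      = 2 * (deriv ρ x₀ ^ 2 + ρ x₀ * deriv (deriv ρ) x₀) := by
  obtain ⟨U, hU, hx₀, hρ1, hρ2, -⟩ := exists_isOpen_hasDerivAt_deriv_of_contDiffAt hρ
  have hfst : deriv (fun x => ρ x ^ 2) =ᶠ[𝓝 x₀] fun x => 2 * (ρ x * deriv ρ x) := by
    filter_upwards [hU.mem_nhds hx₀] with x hx
    rw [((hρ1 x hx).fun_pow 2).deriv]
    ring
  rw [hfst.deriv_eq, (((hρ1 x₀ hx₀).fun_mul (hρ2 x₀ hx₀)).const_mul 2).deriv]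
  ring

theorem deriv_sqrt_sq_add_sqrt_mul_deriv_deriv {Q : ℝ → ℝ} {x₀ : ℝ} (hQ : ContDiffAt ℝ 2 Q x₀)
    (hpos : 0 < Q x₀) :
    deriv (fun x => √(Q x)) x₀ ^ 2 + √(Q x₀) * deriv (deriv fun x => √(Q x)) x₀
      = deriv (deriv Q) x₀ / 2 := by
  have hsq : (fun x => √(Q x) ^ 2) =ᶠ[𝓝 x₀] Q := by
    filter_upwards [hQ.continuousAt.eventually (lt_mem_nhds hpos)] with x hx
    exact Real.sq_sqrt hx.le
  rw [← hsq.deriv.deriv_eq, deriv_deriv_sq_of_contDiffAt (hQ.sqrt hpos.ne')]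
  ring

theorem deriv_deriv_quadratic (a b c x₀ x : ℝ) :
    deriv (deriv fun x => a + b * (x - x₀) + c * (x - x₀) ^ 2) x = 2 * c := by
  have hlin (y : ℝ) : HasDerivAt (fun x => x - x₀) 1 y := (hasDerivAt_id y).sub_const x₀
  have hfst : deriv (fun x => a + b * (x - x₀) + c * (x - x₀) ^ 2)
      = fun x => b + 2 * c * (x - x₀) := funext fun y =>
    ((((hlin y).const_mul b).const_add a).fun_add (((hlin y).fun_pow 2).const_mul c)).deriv.trans
      (by norm_num; ring)
  rw [hfst, (((hlin x).const_mul (2 * c)).const_add b).deriv, mul_one]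

theorem exists_contDiffAt_touching_below {τ : ℝ → ℝ} {M A : ℝ} (hτ : ∀ x, 0 ≤ τ x)
    (hLip : ∀ x y, |τ x - τ y| ≤ M * |x - y|) (hA : 0 ≤ A)
    (hsc : ConvexOn ℝ univ fun x => τ x ^ 2 + A * x ^ 2) (x₀ : ℝ) :
    ∃ ρ : ℝ → ℝ, (∀ x, 0 ≤ ρ x) ∧ (∀ x, ρ x ≤ τ x) ∧ ρ x₀ = τ x₀ ∧ ContDiffAt ℝ 2 ρ x₀ ∧
      |deriv ρ x₀| ≤ M ∧ -(M ^ 2 + A) ≤ ρ x₀ * deriv (deriv ρ) x₀ := by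
  rcases (hτ x₀).eq_or_lt with h0 | h0
  · have hM : 0 ≤ M := by simpa using (abs_nonneg _).trans (hLip 1 0)
    refine ⟨fun _ => 0, fun _ => le_rfl, hτ, h0, contDiffAt_const, by simpa using hM, ?_⟩
    simp only [zero_mul, neg_nonpos]
    positivity
  obtain ⟨p, hp⟩ := exists_affine_le_of_convexOn hsc x₀
  -- The support line of `τ ^ 2 + A x ^ 2` at `x₀`, minus `A x ^ 2`.
  let Q : ℝ → ℝ := fun x => τ x₀ ^ 2 + (p - 2 * A * x₀) * (x - x₀) + -A * (x - x₀) ^ 2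
  have hQle (x : ℝ) : Q x ≤ τ x ^ 2 := by
    simp only [Q]
    linarith [hp x]
  have hQ0 : Q x₀ = τ x₀ ^ 2 := by simp [Q]
  have hQpos : 0 < Q x₀ := hQ0 ▸ pow_pos h0 2
  have hQ : ContDiffAt ℝ 2 Q x₀ := ContDiff.contDiffAt (by fun_prop)
  have hρ0 : √(Q x₀) = τ x₀ := by rw [hQ0, Real.sqrt_sq h0.le]
  have hρle (x : ℝ) : √(Q x) ≤ τ x := Real.sqrt_le_iff.2 ⟨hτ x, hQle x⟩
  have hρ : ContDiffAt ℝ 2 (fun x => √(Q x)) x₀ := hQ.sqrt hQpos.ne'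
  have hslope : |deriv (fun x => √(Q x)) x₀| ≤ M :=
    abs_le_of_hasDerivAt_of_le_add_mul_abs (hρ.differentiableAt (by norm_num)).hasDerivAt
      fun x => by linarith [hρle x, (abs_le.1 (hLip x x₀)).2]
  refine ⟨fun x => √(Q x), fun x => Real.sqrt_nonneg _, hρle, hρ0, hρ, hslope, ?_⟩
  have hcurv := deriv_sqrt_sq_add_sqrt_mul_deriv_deriv hQ hQpos
  rw [deriv_deriv_quadratic] at hcurv
  linarith [sq_le_sq' (abs_le.1 hslope).1 (abs_le.1 hslope).2]

theorem hasDerivAt_intervalIntegral_of_continuousOn {E : Type*} [NormedAddCommGroup E]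
    [NormedSpace ℝ E] {K K' : ℝ → ℝ → E} {U : Set ℝ} {a b x₀ : ℝ} (hU : U ∈ 𝓝 x₀)
    (hK : ∀ x ∈ U, Continuous (K x)) (hK' : ContinuousOn (Function.uncurry K') (U ×ˢ univ))
    (hderiv : ∀ x ∈ U, ∀ z, HasDerivAt (fun x => K x z) (K' x z) x) :
    HasDerivAt (fun x => ∫ z in a..b, K x z) (∫ z in a..b, K' x₀ z) x₀ := by
  obtain ⟨V, hV, hVU, hVc⟩ := local_compact_nhds hU
  obtain ⟨C, hC⟩ := (hVc.prod isCompact_uIcc).exists_bound_of_continuousOn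
    (hK'.mono (prod_mono hVU (subset_univ (uIcc a b))))
  have hK'x₀ : Continuous (K' x₀) := continuousOn_univ.1 <| hK'.comp (f := fun z => (x₀, z))
    (by fun_prop) fun z _ => ⟨mem_of_mem_nhds hU, mem_univ z⟩
  refine (intervalIntegral.hasDerivAt_integral_of_dominated_loc_of_deriv_le hV
    (bound := fun _ => C) ?_ ((hK x₀ (mem_of_mem_nhds hU)).intervalIntegrable a b)
    hK'x₀.aestronglyMeasurable (ae_of_all _ fun z hz x hx => ?_) intervalIntegrable_const
    (ae_of_all _ fun z _ x hx => hderiv x (hVU hx) z)).2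
  · filter_upwards [hU] with x hx using (hK x hx).aestronglyMeasurable
  · exact hC (x, z) ⟨hx, uIoc_subset_uIcc hz⟩

theorem integral_comp_add_mul_le_of_convexOn {f w : ℝ → ℝ} (hf : ConvexOn ℝ univ f)
    (hwc : Continuous w) (hw0 : 0 ≤ w) (hweven : Function.Even w) {s : ℝ} (hs : 0 ≤ s) (m : ℝ)
    {r R : ℝ} (hr : |r| ≤ R) :
    ∫ z in -s..s, f (m + r * z) * w z ≤ ∫ z in -s..s, f (m + R * z) * w z := by
  have hfc : Continuous f := continuousOn_univ.1 (hf.continuousOn isOpen_univ)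
  refine convexOn_le_of_even (g := fun r => ∫ z in -s..s, f (m + r * z) * w z) ?_ (fun r => ?_) hr
  · refine convexOn_intervalIntegral (neg_le_self hs) (fun z => ?_) fun r =>
      Continuous.intervalIntegrable (by fun_prop) _ _
    have hline := hf.comp_affineMap (AffineMap.lineMap m (m + z))
    refine (hline.smul (hw0 z)).congr fun r _ => ?_
    simp [AffineMap.lineMap_apply, mul_comm, add_comm]
  · simpa [hweven _] using
      intervalIntegral.integral_comp_neg (a := -s) (b := s) fun z => f (m + r * z) * w z

section SecondDeriv

theorem hasDerivAt_deriv_of_contDiff_two {f : ℝ → ℝ} (hf : ContDiff ℝ 2 f) :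
    (∀ x, HasDerivAt f (deriv f x) x) ∧ (∀ x, HasDerivAt (deriv f) (deriv (deriv f) x) x) ∧
      Continuous (deriv (deriv f)) := by
  have hf' : ContDiff ℝ 1 (deriv f) := hf.deriv' (n := 1)
  exact ⟨fun x => (hf.differentiable (by norm_num) x).hasDerivAt,
    fun x => (hf'.differentiable (by norm_num) x).hasDerivAt, hf'.continuous_deriv le_rfl⟩

theorem deriv_deriv_nonneg_of_convexOn {f : ℝ → ℝ} (hf : ConvexOn ℝ univ f)
    (hf' : Differentiable ℝ f) (y : ℝ) : 0 ≤ deriv (deriv f) y :=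
  (monotoneOn_univ.1 (hf.monotoneOn_deriv fun x _ => hf' x)).deriv_nonneg

variable {f f' f'' ρ ρ' ρ'' w : ℝ → ℝ} {U : Set ℝ} {β c a b x₀ : ℝ}

theorem hasDerivAt_integral_comp_affine (hf : ∀ y, HasDerivAt f (f' y) y) (hf' : Continuous f')
    (hU : U ∈ 𝓝 x₀) (hρ : ∀ x ∈ U, HasDerivAt ρ (ρ' x) x) (hρ' : ContinuousOn ρ' U)
    (hw : Continuous w) :
    HasDerivAt (fun x => ∫ z in a..b, f (β * x + c + ρ x * z) * w z)
      (∫ z in a..b, f' (β * x₀ + c + ρ x₀ * z) * (β + ρ' x₀ * z) * w z) x₀ := by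
  have hfc : Continuous f := continuous_iff_continuousAt.2 fun y => (hf y).continuousAt
  have hρc : ContinuousOn ρ U := fun x hx => (hρ x hx).continuousAt.continuousWithinAt
  have hfst : MapsTo Prod.fst (U ×ˢ (univ : Set ℝ)) U := fun p hp => hp.1
  refine hasDerivAt_intervalIntegral_of_continuousOn
    (K' := fun x z => f' (β * x + c + ρ x * z) * (β + ρ' x * z) * w z)
    hU (fun x _ => by fun_prop) ?_ fun x hx z => ?_
  · simp only [Function.uncurry_def]
    fun_prop (disch := assumption)
  · have hY : HasDerivAt (fun x => β * x + c + ρ x * z) (β + ρ' x * z) x := by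
      simpa using (((hasDerivAt_id x).const_mul β).add_const c).fun_add ((hρ x hx).mul_const z)
    exact ((hf _).comp x hY).mul_const (w z)

theorem hasDerivAt_integral_comp_affine_deriv (hf' : ∀ y, HasDerivAt f' (f'' y) y)
    (hf'' : Continuous f'') (hU : U ∈ 𝓝 x₀) (hρ : ∀ x ∈ U, HasDerivAt ρ (ρ' x) x)
    (hρ' : ∀ x ∈ U, HasDerivAt ρ' (ρ'' x) x) (hρ'' : ContinuousOn ρ'' U) (hw : Continuous w) :
    HasDerivAt (fun x => ∫ z in a..b, f' (β * x + c + ρ x * z) * (β + ρ' x * z) * w z)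
      (∫ z in a..b, (f'' (β * x₀ + c + ρ x₀ * z) * (β + ρ' x₀ * z) ^ 2
        + f' (β * x₀ + c + ρ x₀ * z) * (ρ'' x₀ * z)) * w z) x₀ := by
  have hf'c : Continuous f' := continuous_iff_continuousAt.2 fun y => (hf' y).continuousAt
  have hρc : ContinuousOn ρ U := fun x hx => (hρ x hx).continuousAt.continuousWithinAt
  have hρ'c : ContinuousOn ρ' U := fun x hx => (hρ' x hx).continuousAt.continuousWithinAt
  have hfst : MapsTo Prod.fst (U ×ˢ (univ : Set ℝ)) U := fun p hp => hp.1
  refine hasDerivAt_intervalIntegral_of_continuousOn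
    (K' := fun x z => (f'' (β * x + c + ρ x * z) * (β + ρ' x * z) ^ 2
      + f' (β * x + c + ρ x * z) * (ρ'' x * z)) * w z)
    hU (fun x _ => by fun_prop) ?_ fun x hx z => ?_
  · simp only [Function.uncurry_def]
    fun_prop (disch := assumption)
  · have hY : HasDerivAt (fun x => β * x + c + ρ x * z) (β + ρ' x * z) x := by
      simpa using (((hasDerivAt_id x).const_mul β).add_const c).fun_add ((hρ x hx).mul_const z)
    have hY' : HasDerivAt (fun x => β + ρ' x * z) (ρ'' x * z) x :=
      ((hρ' x hx).mul_const z).const_add β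
    refine ((((hf' _).comp x hY).fun_mul hY').mul_const (w z)).congr_deriv ?_
    simp only [Function.comp_apply]
    ring

end SecondDeriv

section Gaussian

theorem continuous_gaussianPDFReal (μ : ℝ) (v : NNReal) : Continuous (gaussianPDFReal μ v) := by
  rw [gaussianPDFReal_def]
  fun_prop

theorem even_gaussianPDFReal (v : NNReal) : Function.Even (gaussianPDFReal 0 v) := fun z => by
  simp [gaussianPDFReal_def]

theorem hasDerivAt_gaussianPDFReal (μ : ℝ) (v : NNReal) (z : ℝ) :
    HasDerivAt (gaussianPDFReal μ v) (-((z - μ) / v * gaussianPDFReal μ v z)) z := by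
  have hexp : HasDerivAt (fun z : ℝ => -(z - μ) ^ 2 / (2 * v)) (-((z - μ) / v)) z := by
    refine ((((hasDerivAt_id z).sub_const μ).fun_pow 2).fun_neg.div_const _).congr_deriv ?_
    simp [mul_div_mul_left, neg_div]
  rw [gaussianPDFReal_def]
  exact (hexp.exp.const_mul _).congr_deriv (by ring)

theorem gaussianPDFReal_zero_one_mul_exp (s z : ℝ) :
    gaussianPDFReal 0 1 z * Real.exp ((z ^ 2 - s ^ 2) / 2) = gaussianPDFReal 0 1 s := by
  simp only [gaussianPDFReal_def, mul_assoc, ← Real.exp_add]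
  congr 2
  simp
  ring

theorem gaussianPDFReal_zero_one_le_of_abs_le {s z : ℝ} (hz : |z| ≤ s) :
    gaussianPDFReal 0 1 s ≤ gaussianPDFReal 0 1 z := by
  rw [← gaussianPDFReal_zero_one_mul_exp s z]
  refine mul_le_of_le_one_right (gaussianPDFReal_nonneg 0 1 z) (Real.exp_le_one_iff.2 ?_)
  linarith [sq_le_sq' (abs_le.1 hz).1 (abs_le.1 hz).2]

theorem gaussianPDFReal_zero_one_sub_le (s z : ℝ) :
    gaussianPDFReal 0 1 z - gaussianPDFReal 0 1 s ≤ s ^ 2 / 2 * gaussianPDFReal 0 1 z := by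
  have hexp : 1 - s ^ 2 / 2 ≤ Real.exp ((z ^ 2 - s ^ 2) / 2) := by
    linarith [Real.add_one_le_exp ((z ^ 2 - s ^ 2) / 2), sq_nonneg z]
  rw [← gaussianPDFReal_zero_one_mul_exp s z]
  linarith [mul_le_mul_of_nonneg_left hexp (gaussianPDFReal_nonneg 0 1 z)]

theorem integral_mul_id_mul_gaussianPDFReal {u u' : ℝ → ℝ} (hu : ∀ z, HasDerivAt u (u' z) z)
    (hu' : Continuous u') (s : ℝ) :
    ∫ z in -s..s, u z * z * gaussianPDFReal 0 1 z
      = ∫ z in -s..s, u' z * (gaussianPDFReal 0 1 z - gaussianPDFReal 0 1 s) := by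
  have hφ := continuous_gaussianPDFReal 0 1
  have hparts := intervalIntegral.integral_mul_deriv_eq_deriv_mul (a := -s) (b := s)
    (v := fun z => gaussianPDFReal 0 1 s - gaussianPDFReal 0 1 z)
    (v' := fun z => z * gaussianPDFReal 0 1 z) (fun z _ => hu z)
    (fun z _ => by simpa using (hasDerivAt_gaussianPDFReal 0 1 z).const_sub _)
    (hu'.intervalIntegrable _ _) (Continuous.intervalIntegrable (by fun_prop) _ _)
  rw [even_gaussianPDFReal, sub_self, mul_zero, mul_zero, sub_zero, zero_sub,
    ← intervalIntegral.integral_neg] at hparts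
  simpa only [mul_assoc, ← mul_neg, neg_sub] using hparts

theorem mul_gaussianPDFReal_sub_le {Λ s z t β : ℝ} (hz : |z| ≤ s) (ht : t ^ 2 ≤ Λ)
    (hβ : (1 + √2 / 2) * (s * √Λ) ≤ β) :
    Λ * (gaussianPDFReal 0 1 z - gaussianPDFReal 0 1 s)
      ≤ (β + t * z) ^ 2 * gaussianPDFReal 0 1 z := by
  have hΛ : 0 ≤ Λ := (sq_nonneg t).trans ht
  have hs : 0 ≤ s := (abs_nonneg z).trans hz
  have htz : |t * z| ≤ s * √Λ := by
    rw [abs_mul, mul_comm]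
    exact mul_le_mul hz (Real.abs_le_sqrt ht) (abs_nonneg t) hs
  have hlow : √2 / 2 * (s * √Λ) ≤ β + t * z := by linarith [(abs_le.1 htz).1]
  have hsq : Λ * (s ^ 2 / 2) ≤ (β + t * z) ^ 2 := calc
    Λ * (s ^ 2 / 2) = (√2 / 2 * (s * √Λ)) ^ 2 := by
      rw [mul_pow, div_pow, mul_pow, Real.sq_sqrt zero_le_two, Real.sq_sqrt hΛ]
      ring
    _ ≤ (β + t * z) ^ 2 := pow_le_pow_left₀ (by positivity) hlow 2
  calc Λ * (gaussianPDFReal 0 1 z - gaussianPDFReal 0 1 s)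
      ≤ Λ * (s ^ 2 / 2 * gaussianPDFReal 0 1 z) :=
        mul_le_mul_of_nonneg_left (gaussianPDFReal_zero_one_sub_le s z) hΛ
    _ ≤ (β + t * z) ^ 2 * gaussianPDFReal 0 1 z := by
        rw [← mul_assoc]
        exact mul_le_mul_of_nonneg_right hsq (gaussianPDFReal_nonneg 0 1 z)

theorem integral_second_variation_mul_gaussianPDFReal {f' f'' : ℝ → ℝ}
    (hf' : ∀ y, HasDerivAt f' (f'' y) y) (hf'' : Continuous f'') (s t β r k m : ℝ) :
    ∫ z in -s..s, (f'' (m + r * z) * (β + t * z) ^ 2 + f' (m + r * z) * (k * z))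
        * gaussianPDFReal 0 1 z
      = ∫ z in -s..s, f'' (m + r * z) * ((β + t * z) ^ 2 * gaussianPDFReal 0 1 z
          + r * k * (gaussianPDFReal 0 1 z - gaussianPDFReal 0 1 s)) := by
  have hφ := continuous_gaussianPDFReal 0 1
  have hf'c : Continuous f' := continuous_iff_continuousAt.2 fun y => (hf' y).continuousAt
  have hline (z : ℝ) : HasDerivAt (fun z => m + r * z) r z := by
    simpa using ((hasDerivAt_id z).const_mul r).const_add m
  have hparts := integral_mul_id_mul_gaussianPDFReal (u := fun z => k * f' (m + r * z))
    (u' := fun z => k * (f'' (m + r * z) * r))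
    (fun z => ((hf' _).comp z (hline z)).const_mul k) (by fun_prop) s
  calc
    _ = (∫ z in -s..s, f'' (m + r * z) * (β + t * z) ^ 2 * gaussianPDFReal 0 1 z)
        + ∫ z in -s..s, k * f' (m + r * z) * z * gaussianPDFReal 0 1 z := by
      rw [← intervalIntegral.integral_add (Continuous.intervalIntegrable (by fun_prop) _ _)
        (Continuous.intervalIntegrable (by fun_prop) _ _)]
      congr 1 with z
      ring
    _ = _ := by
      rw [hparts, ← intervalIntegral.integral_add (Continuous.intervalIntegrable (by fun_prop) _ _)
        (Continuous.intervalIntegrable (by fun_prop) _ _)]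
      congr 1 with z
      ring

theorem integral_second_variation_mul_gaussianPDFReal_nonneg {f' f'' : ℝ → ℝ}
    (hf' : ∀ y, HasDerivAt f' (f'' y) y) (hf'' : Continuous f'') (hf''0 : 0 ≤ f'')
    {Λ s t β r k : ℝ} (hs : 0 ≤ s) (ht : t ^ 2 ≤ Λ) (hβ : (1 + √2 / 2) * (s * √Λ) ≤ β)
    (hk : -Λ ≤ r * k) (m : ℝ) :
    0 ≤ ∫ z in -s..s, (f'' (m + r * z) * (β + t * z) ^ 2 + f' (m + r * z) * (k * z))
      * gaussianPDFReal 0 1 z := by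
  rw [integral_second_variation_mul_gaussianPDFReal hf' hf'']
  refine intervalIntegral.integral_nonneg (neg_le_self hs) fun z hz => mul_nonneg (hf''0 _) ?_
  have hgap := sub_nonneg.2 (gaussianPDFReal_zero_one_le_of_abs_le (abs_le.2 hz))
  linarith [mul_gaussianPDFReal_sub_le (abs_le.2 hz) ht hβ, mul_le_mul_of_nonneg_right hk hgap]

end Gaussian

section EulerStep

variable {f τ : ℝ → ℝ} {M A s β : ℝ}

theorem convexOn_integral_comp_affine_mul_gaussianPDFReal_of_contDiff (hf : ConvexOn ℝ univ f)
    (hf2 : ContDiff ℝ 2 f) (hτ : ∀ x, 0 ≤ τ x) (hLip : ∀ x y, |τ x - τ y| ≤ M * |x - y|)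
    (hA : 0 ≤ A) (hsc : ConvexOn ℝ univ fun x => τ x ^ 2 + A * x ^ 2) (hs : 0 ≤ s)
    (hβ : (1 + √2 / 2) * (s * √(M ^ 2 + A)) ≤ β) (c : ℝ) :
    ConvexOn ℝ univ fun x => ∫ z in -s..s, f (β * x + c + τ x * z) * gaussianPDFReal 0 1 z := by
  have hφ := continuous_gaussianPDFReal 0 1
  have hτc := continuous_of_abs_sub_le_mul hLip
  obtain ⟨hf', hf'', hf''c⟩ := hasDerivAt_deriv_of_contDiff_two hf2
  have hf''0 : 0 ≤ deriv (deriv f) := deriv_deriv_nonneg_of_convexOn hf fun y =>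
    (hf' y).differentiableAt
  have hf'c : Continuous (deriv f) := continuous_iff_continuousAt.2 fun y => (hf'' y).continuousAt
  refine convexOn_univ_of_touching_below (by fun_prop) fun x₀ => ?_
  obtain ⟨ρ, hρ0, hρτ, hρx₀, hρ, hslope, hcurv⟩ :=
    exists_contDiffAt_touching_below hτ hLip hA hsc x₀
  obtain ⟨U, hU, hx₀, hρ', hρ'', hρ''c⟩ := exists_isOpen_hasDerivAt_deriv_of_contDiffAt hρ
  have hρ'c : ContinuousOn (deriv ρ) U := fun x hx => (hρ'' x hx).continuousAt.continuousWithinAt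
  have hslope2 : deriv ρ x₀ ^ 2 ≤ M ^ 2 + A := by
    linarith [sq_le_sq' (abs_le.1 hslope).1 (abs_le.1 hslope).2]
  refine ⟨fun x => ∫ z in -s..s, f (β * x + c + ρ x * z) * gaussianPDFReal 0 1 z, _, _, fun x => ?_,
    by simp only [hρx₀], ?_,
    hasDerivAt_integral_comp_affine_deriv (c := c) hf'' hf''c (hU.mem_nhds hx₀) hρ' hρ'' hρ''c
      hφ,
    integral_second_variation_mul_gaussianPDFReal_nonneg hf'' hf''c hf''0 hs hslope2 hβ hcurv _⟩
  · exact integral_comp_add_mul_le_of_convexOn hf hφ (gaussianPDFReal_nonneg 0 1)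
      (even_gaussianPDFReal 1) hs _ (by simpa [abs_of_nonneg (hρ0 x)] using hρτ x)
  · filter_upwards [hU.mem_nhds hx₀] with x hx
    exact hasDerivAt_integral_comp_affine hf' hf'c (hU.mem_nhds hx) hρ' hρ'c hφ

theorem convexOn_integral_comp_affine_mul_gaussianPDFReal (hf : ConvexOn ℝ univ f)
    (hτ : ∀ x, 0 ≤ τ x) (hLip : ∀ x y, |τ x - τ y| ≤ M * |x - y|)
    (hA : 0 ≤ A) (hsc : ConvexOn ℝ univ fun x => τ x ^ 2 + A * x ^ 2) (hs : 0 ≤ s)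
    (hβ : (1 + √2 / 2) * (s * √(M ^ 2 + A)) ≤ β) (c : ℝ) :
    ConvexOn ℝ univ fun x => ∫ z in -s..s, f (β * x + c + τ x * z) * gaussianPDFReal 0 1 z := by
  have hφ := continuous_gaussianPDFReal 0 1
  have hfc : Continuous f := continuousOn_univ.1 (hf.continuousOn isOpen_univ)
  obtain ⟨g, hg2, hg, hgf⟩ := exists_contDiff_convexOn_tendstoLocallyUniformly hf
  have hlim (x : ℝ) : Tendsto
      (fun n => ∫ z in -s..s, g n (β * x + c + τ x * z) * gaussianPDFReal 0 1 z) atTop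
      (𝓝 (∫ z in -s..s, f (β * x + c + τ x * z) * gaussianPDFReal 0 1 z)) := by
    refine TendstoUniformlyOn.tendsto_intervalIntegral_of_continuousOn
      (.of_forall fun n => ?_) ?_
    · have := (hg2 n).continuous
      fun_prop
    · have hline : TendstoLocallyUniformly (fun n z => g n (β * x + c + τ x * z))
          (fun z => f (β * x + c + τ x * z)) atTop := hgf.comp _ (by fun_prop)
      have hconst : TendstoLocallyUniformly (fun _ : ℕ => gaussianPDFReal 0 1)
          (gaussianPDFReal 0 1) atTop := fun u hu _ =>
        ⟨univ, univ_mem, .of_forall fun _ _ _ => refl_mem_uniformity hu⟩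
      exact tendstoLocallyUniformly_iff_forall_isCompact.1
        (hline.mul₀ hconst (by fun_prop) hφ) _ isCompact_uIcc
  exact isClosed_setOfPred_convexOn.mem_of_tendsto (tendsto_pi_nhds.2 hlim) <| .of_forall fun n =>
    convexOn_integral_comp_affine_mul_gaussianPDFReal_of_contDiff (hg n) (hg2 n) hτ hLip hA hsc hs
      hβ c

end EulerStep

section TruncatedNoise

variable {s : ℝ}

theorem integral_comp_ite_abs_le {E : Type*} [NormedAddCommGroup E] [NormedSpace ℝ E]
    [CompleteSpace E] {μ : Measure ℝ} [IsFiniteMeasure μ] {g : ℝ → E} (hg : Continuous g) :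
    ∫ z, g (if |z| ≤ s then z else 0) ∂μ
      = ∫ z in Icc (-s) s, g z ∂μ + μ.real (Icc (-s) s)ᶜ • g 0 := by
  rw [← setIntegral_const, ← integral_piecewise measurableSet_Icc
    (hg.continuousOn.integrableOn_compact isCompact_Icc) (integrableOn_const (by finiteness))]
  congr 1 with z
  simp only [piecewise, mem_Icc, ← abs_le]
  split_ifs <;> rfl

theorem setIntegral_Icc_gaussianReal {E : Type*} [NormedAddCommGroup E] [NormedSpace ℝ E]
    {μ : ℝ} {v : NNReal} (hv : v ≠ 0) {a b : ℝ} (hab : a ≤ b) (g : ℝ → E) :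
    ∫ z in Icc a b, g z ∂gaussianReal μ v = ∫ z in a..b, gaussianPDFReal μ v z • g z := by
  rw [← integral_indicator measurableSet_Icc, integral_gaussianReal_eq_integral_smul hv,
    intervalIntegral.integral_of_le hab, ← integral_Icc_eq_integral_Ioc,
    ← integral_indicator measurableSet_Icc]
  congr 1 with z
  exact (indicator_smul_apply (Icc a b) (gaussianPDFReal μ v) g z).symm

variable {Ω : Type*} [MeasurableSpace Ω] {P : Measure Ω} {Z : Ω → ℝ}

theorem integral_comp_ite_abs_le_of_hasLaw_gaussianReal
    (hZ : HasLaw Z (gaussianReal 0 1) P) (hs : 0 ≤ s) {g : ℝ → ℝ} (hg : Continuous g) :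
    ∫ ω, g (if |Z ω| ≤ s then Z ω else 0) ∂P
      = (∫ z in -s..s, g z * gaussianPDFReal 0 1 z)
        + (gaussianReal 0 1).real (Icc (-s) s)ᶜ * g 0 := by
  have hmeas : Measurable fun z : ℝ => g (if |z| ≤ s then z else 0) := hg.measurable.comp <|
    Measurable.ite (measurableSet_le (by fun_prop) measurable_const) measurable_id measurable_const
  calc ∫ ω, g (if |Z ω| ≤ s then Z ω else 0) ∂P
      = ∫ z, g (if |z| ≤ s then z else 0) ∂gaussianReal 0 1 :=
        hZ.integral_comp hmeas.aestronglyMeasurable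
    _ = _ := by
        rw [integral_comp_ite_abs_le hg, setIntegral_Icc_gaussianReal one_ne_zero (neg_le_self hs)]
        simp only [smul_eq_mul, mul_comm]

theorem convexOn_integral_comp_affine_truncated_gaussian
    (hZ : HasLaw Z (gaussianReal 0 1) P) {f τ : ℝ → ℝ} {M A β : ℝ} (hf : ConvexOn ℝ univ f)
    (hτ : ∀ x, 0 ≤ τ x) (hLip : ∀ x y, |τ x - τ y| ≤ M * |x - y|)
    (hA : 0 ≤ A) (hsc : ConvexOn ℝ univ fun x => τ x ^ 2 + A * x ^ 2) (hs : 0 ≤ s)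
    (hβ : (1 + √2 / 2) * (s * √(M ^ 2 + A)) ≤ β) (c : ℝ) :
    ConvexOn ℝ univ
      fun x => ∫ ω, f (β * x + c + τ x * (if |Z ω| ≤ s then Z ω else 0)) ∂P := by
  have hfc : Continuous f := continuousOn_univ.1 (hf.continuousOn isOpen_univ)
  have hsplit (x : ℝ) := integral_comp_ite_abs_le_of_hasLaw_gaussianReal
    (g := fun z => f (β * x + c + τ x * z)) hZ hs (by fun_prop)
  simp only [hsplit]
  refine (convexOn_integral_comp_affine_mul_gaussianPDFReal hf hτ hLip hA hsc hs hβ c).add ?_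
  have hatom := hf.comp_affineMap (AffineMap.lineMap c (c + β))
  have hmass : 0 ≤ (gaussianReal 0 1).real (Icc (-s) s)ᶜ := measureReal_nonneg
  refine (hatom.smul hmass).congr fun x _ => ?_
  simp [AffineMap.lineMap_apply, mul_comm]

end TruncatedNoise

section EulerComp

variable {Ω : Type*} [MeasurableSpace Ω] {P : Measure Ω} {Z : Ω → ℝ} {h L a lam ζ : ℝ}

theorem convexOn_integral_truncated_euler_step (hZ : HasLaw Z (gaussianReal 0 1) P) (hh : 0 < h)
    (hL : 0 < L) (ha : 0 ≤ a) (hlam : lam ∈ Icc 0 (1 / (2 + √2))) {κ : ℝ}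
    (hdrift : h * max (-κ) 0 ≤ 1 / 2) {σ : ℝ → ℝ} (hσ0 : ∀ x, 0 ≤ σ x)
    (hσLip : ∀ x y, |σ x - σ y| ≤ L * |x - y|)
    (hsc : ConvexOn ℝ univ fun x => σ x ^ 2 + a * x ^ 2) {f : ℝ → ℝ} (hf : ConvexOn ℝ univ f) :
    ConvexOn ℝ univ fun x => ∫ ω, f (x + h * κ * (x - ζ) +
      √h * σ x * (if |Z ω| ≤ lam / √(h * (L ^ 2 + a)) then Z ω else 0)) ∂P := by
  have hΛ : (√h * L) ^ 2 + h * a = h * (L ^ 2 + a) := by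
    rw [mul_pow, Real.sq_sqrt hh.le]
    ring
  have hβ : 1 / 2 ≤ 1 + h * κ := by
    linarith [mul_le_mul_of_nonneg_left (le_max_left (-κ) 0) hh.le]
  have hlam' : (1 + √2 / 2) * lam ≤ 1 / 2 := by
    linarith [(le_div_iff₀ (by positivity)).1 hlam.2]
  have hscale : ConvexOn ℝ univ fun x => (√h * σ x) ^ 2 + h * a * x ^ 2 := by
    refine (hsc.smul hh.le).congr fun x _ => ?_
    simp only [mul_pow, Real.sq_sqrt hh.le, smul_eq_mul]
    ring
  have hstep := convexOn_integral_comp_affine_truncated_gaussian hZ hf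
    (fun x => mul_nonneg (Real.sqrt_nonneg h) (hσ0 x)) (M := √h * L) (A := h * a)
    (s := lam / √(h * (L ^ 2 + a))) (β := 1 + h * κ) (fun x y => ?_) (by positivity) hscale
    (div_nonneg hlam.1 (Real.sqrt_nonneg _)) ?_ (-(h * κ * ζ))
  · refine hstep.congr fun x _ => ?_
    ring_nf
  · rw [← mul_sub, abs_mul, abs_of_nonneg (Real.sqrt_nonneg h), mul_assoc]
    exact mul_le_mul_of_nonneg_left (hσLip x y) (Real.sqrt_nonneg h)
  · rw [hΛ, div_mul_cancel₀ _ (by positivity)]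
    exact hlam'.trans hβ

theorem convexOn_truncEulerComp (hZ : HasLaw Z (gaussianReal 0 1) P) (hh : 0 < h) (hL : 0 < L)
    (ha : 0 ≤ a) (hlam : lam ∈ Icc 0 (1 / (2 + √2)))
    {κ : ℕ → ℝ} {σ : ℕ → ℝ → ℝ} {i j : ℕ} (hdrift : ∀ ℓ ∈ Ico i j, h * max (-κ ℓ) 0 ≤ 1 / 2)
    (hσ0 : ∀ ℓ x, 0 ≤ σ ℓ x) (hσLip : ∀ ℓ x y, |σ ℓ x - σ ℓ y| ≤ L * |x - y|)
    (hsc : ∀ ℓ, ConvexOn ℝ univ fun x => σ ℓ x ^ 2 + a * x ^ 2) {f : ℝ → ℝ}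
    (hf : ConvexOn ℝ univ f) :
    ConvexOn ℝ univ (truncEulerComp P Z (lam / √(h * (L ^ 2 + a))) h κ ζ σ i j f) := by
  have hmem : ∀ ℓ ∈ List.range' i (j - i), ℓ ∈ Ico i j := fun ℓ hℓ => by
    rw [List.mem_range'_1] at hℓ
    exact ⟨hℓ.1, by omega⟩
  unfold truncEulerComp
  generalize List.range' i (j - i) = l at hmem ⊢
  induction l with
  | nil => exact hf
  | cons ℓ l ih =>
    rw [List.forall_mem_cons] at hmem
    exact convexOn_integral_truncated_euler_step hZ hh hL ha hlam (hdrift ℓ hmem.1)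
      (hσ0 ℓ) (hσLip ℓ) (hsc ℓ) (ih hmem.2)

end EulerComp

theorem convexOn_of_forall_isLUB {E ι : Type*} [AddCommGroup E] [Module ℝ E] {s : Set E}
    {S : Set ι} {F : ι → E → ℝ} {v : E → ℝ} (hs : Convex ℝ s) (hF : ∀ i ∈ S, ConvexOn ℝ s (F i))
    (hv : ∀ x ∈ s, IsLUB {r | ∃ i ∈ S, r = F i x} (v x)) : ConvexOn ℝ s v := by
  refine ⟨hs, fun x hx y hy p q hp hq hpq => (hv _ (hs hx hy hp hq hpq)).2 ?_⟩
  rintro _ ⟨i, hi, rfl⟩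
  calc F i (p • x + q • y) ≤ p • F i x + q • F i y := (hF i hi).2 hx hy hp hq hpq
    _ ≤ p • v x + q • v y := by
      gcongr
      exacts [(hv x hx).1 ⟨i, hi, rfl⟩, (hv y hy).1 ⟨i, hi, rfl⟩]

theorem truncated_swing_value_convexOn_general {n m : ℕ} {Ω : Type*} [MeasurableSpace Ω]
    {P : Measure Ω} {Z : Ω → ℝ} (hZ : HasLaw Z (gaussianReal 0 1) P)
    {h L a lam ζ : ℝ} (hh : 0 < h) (hL : 0 < L) (ha : 0 ≤ a)
    (hlam : lam ∈ Icc 0 (1 / (2 + √2))) {κ : ℕ → ℝ} {σ : ℕ → ℝ → ℝ}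
    (hdrift : ∀ ℓ < m * n, h * max (-κ ℓ) 0 ≤ 1 / 2)
    (hσ0 : ∀ ℓ x, 0 ≤ σ ℓ x) (hσLip : ∀ ℓ x y, |σ ℓ x - σ ℓ y| ≤ L * |x - y|)
    (hsc : ∀ ℓ, ConvexOn ℝ univ fun x => σ ℓ x ^ 2 + a * x ^ 2)
    {Adm : ℕ → ℝ → Set ℝ} {Ψ v : ℕ → ℝ → ℝ → ℝ}
    (hΨ : ∀ k < n, ∀ Q, ∀ q ∈ Adm k Q, ConvexOn ℝ univ (Ψ k q))
    (hvn : ∀ Q, ConvexOn ℝ univ fun x => v n x Q)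
    (hrec : ∀ k < n, ∀ x Q, IsLUB {r : ℝ | ∃ q ∈ Adm k Q, r = Ψ k q x +
      truncEulerComp P Z (lam / √(h * (L ^ 2 + a))) h κ ζ σ (k * m) ((k + 1) * m)
        (fun y => v (k + 1) y (Q + q)) x} (v k x Q)) {k : ℕ} (hk : k ≤ n) (Q : ℝ) :
    ConvexOn ℝ univ fun x => v k x Q := by
  induction hk using Nat.decreasingInduction generalizing Q with
  | self => exact hvn Q
  | of_succ k hk ih =>
    refine convexOn_of_forall_isLUB convex_univ (fun q hq => ?_) fun x _ => hrec k hk x Q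
    refine (hΨ k hk Q q hq).add <| convexOn_truncEulerComp hZ hh hL ha hlam
      (fun ℓ hℓ => hdrift ℓ ?_) hσ0 hσLip hsc (ih (Q + q))
    calc ℓ < (k + 1) * m := hℓ.2
      _ ≤ m * n := by
        rw [mul_comm m]
        exact Nat.mul_le_mul_right m hk

/-- **Propagation of convexity through the truncated BDPP (one-dimensional, semi-convex
volatility).** If the payoffs `Ψ_k(q, ·)` and terminal `P_n(·, Q)` are convex with at most
linear growth, each `σ_t` is `L`-Lipschitz, nonnegative and semi-convex with common constant
`a`, and `h·max(−κ(t_ℓ), 0) < 1/2` for every `ℓ`, then each truncated swing value function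
`x ↦ ṽ_k(x, Q)` is convex. -/
theorem truncated_swing_value_convexOn {n m : ℕ} (hn : 1 ≤ n) (hm : 1 ≤ m)
    {T : ℝ} (hT : 0 < T)
    {Ω : Type*} [MeasurableSpace Ω] (P : Measure Ω) [IsProbabilityMeasure P]
    (Z : Ω → ℝ) (hZmeas : Measurable Z) (hZ : Measure.map Z P = gaussianReal 0 1)
    (κ : ℝ → ℝ) (hκ : Continuous κ) (ζ : ℝ)
    (σ : ℝ → ℝ → ℝ) (L : ℝ) (hL : 0 < L)
    (hσ0 : ∀ t x, 0 ≤ σ t x)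
    (hσLip : ∀ t x y, |σ t x - σ t y| ≤ L * |x - y|)
    (a : ℝ) (ha : 0 ≤ a)
    (hsc : ∀ t, ConvexOn ℝ Set.univ fun x => σ t x ^ 2 + a * x ^ 2)
    (hdrift : ∀ ℓ, ℓ < m * n →
      (T / ((m : ℝ) * (n : ℝ))) * max (-κ ((ℓ : ℝ) * T / ((m : ℝ) * (n : ℝ)))) 0 < 1 / 2)
    (lam : ℝ) (hlam : lam ∈ Set.Ioo 0 (1 / (2 + Real.sqrt 2)))
    (qbar : ℝ) (hqbar : 0 < qbar)
    (Adm : ℕ → ℝ → Set ℝ)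
    (hAdm : ∀ k, k < n → ∀ Q, (Adm k Q).Nonempty ∧ Adm k Q ⊆ Set.Icc 0 qbar)
    (Ψ : ℕ → ℝ → ℝ → ℝ) (Pn : ℝ → ℝ → ℝ)
    (hΨcvx : ∀ k, k < n → ∀ qc ∈ Set.Icc (0 : ℝ) qbar,
      ConvexOn ℝ Set.univ (fun x => Ψ k qc x) ∧ ∃ C, ∀ x, |Ψ k qc x| ≤ C * (1 + |x|))
    (hPncvx : ∀ Q, ConvexOn ℝ Set.univ (fun x => Pn x Q) ∧
      ∃ C, ∀ x, |Pn x Q| ≤ C * (1 + |x|))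
    (v : ℕ → ℝ → ℝ → ℝ)
    (hvn : ∀ x Q, v n x Q = Pn x Q)
    (hrec : ∀ k, k < n → ∀ x Q,
      IsLUB {r : ℝ | ∃ qc ∈ Adm k Q, r = Ψ k qc x +
        truncEulerComp P Z (lam / Real.sqrt ((T / ((m : ℝ) * (n : ℝ))) * (L ^ 2 + a)))
          (T / ((m : ℝ) * (n : ℝ)))
          (fun ℓ => κ ((ℓ : ℝ) * T / ((m : ℝ) * (n : ℝ)))) ζ
          (fun ℓ => σ ((ℓ : ℝ) * T / ((m : ℝ) * (n : ℝ))))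
          (k * m) ((k + 1) * m)
          (fun y => v (k + 1) y (Q + qc)) x}
        (v k x Q)) :
    ∀ k, k ≤ n → ∀ Q, ConvexOn ℝ Set.univ fun x => v k x Q := by
  have hh : 0 < T / ((m : ℝ) * n) :=
    div_pos hT (mul_pos (Nat.cast_pos.2 hm) (Nat.cast_pos.2 hn))
  have hlaw : HasLaw Z (gaussianReal 0 1) P := ⟨hZmeas.aemeasurable, hZ⟩
  exact fun k hk Q => truncated_swing_value_convexOn_general hlaw hh hL ha
    (Ioo_subset_Icc_self hlam) (fun ℓ hℓ => (hdrift ℓ hℓ).le) (fun ℓ => hσ0 _) (fun ℓ => hσLip _)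
    (fun ℓ => hsc _) (fun k hk Q q hq => (hΨcvx k hk q ((hAdm k hk Q).2 hq)).1)
    (fun Q => by simpa only [hvn] using (hPncvx Q).1) hrec hk Q
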